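/- In the duad-syntheme incidence structure, the following hold: every syntheme contains exactly 3 duads; every duad is contained in exactly 3 synthemes; any two distinct duads are contained in at most one common syntheme; and for every duad p and every syntheme L with p ∉ L, there is exactly one duad q ∈ L such that p and q lie in a common syntheme. (Thus the structure is a generalized quadrangle of order two, the doily.) -/

import Mathlib

/-- A duad: a 2-element subset of the 6-element set. -/
def IsDuad (p : Finset (Fin 6)) : Prop := p.card = 2

/-- A syntheme: a set of three duads partitioning the 6-element set. -/
def IsSyntheme (L : Finset (Finset (Fin 6))) : Prop :=
  L.card = 3 ∧ (∀ p ∈ L, IsDuad p) ∧ ∀ i : Fin 6, ∃! p, p ∈ L ∧ i ∈ p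

/-!
Two distinct duads are collinear exactly when they are disjoint, and the syntheme joining disjoint
duads `p` and `q` can only be `{p, q, (p ∪ q)ᶜ}`. Hence a syntheme through `p` is determined by the
partner it gives to a fixed point `a ∉ p`, for which there are three choices. If `p` is not in a
syntheme `L`, its two points lie in two different members of `L`, so exactly one member is disjoint
from `p`.
-/

open Finset

section ExactCover

variable {α : Type*} {L : Finset (Finset α)} {p q : Finset α}

/-- An exact cover: a family of finite sets such that every point lies in exactly one of them.
Unlike for `Setoid.IsPartition`, the empty set may be a member. -/
def IsExactCover (L : Finset (Finset α)) : Prop := ∀ i, ∃! p, p ∈ L ∧ i ∈ p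

theorem IsExactCover.mem_iff_eq (hL : IsExactCover L) (hp : p ∈ L) (hq : q ∈ L) {i : α}
    (hi : i ∈ p) : i ∈ q ↔ q = p where
  mp hiq := (hL i).unique ⟨hq, hiq⟩ ⟨hp, hi⟩
  mpr hqp := hqp ▸ hi

theorem IsExactCover.disjoint (hL : IsExactCover L) (hp : p ∈ L) (hq : q ∈ L) (hpq : p ≠ q) :
    Disjoint p q :=
  disjoint_left.2 fun _ hip hiq => hpq ((hL.mem_iff_eq hp hq hip).1 hiq).symm

variable [DecidableEq α]

theorem IsExactCover.card_filter_disjoint_add_two (hL : IsExactCover L)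
    (hcard : ∀ q ∈ L, #q ≤ 2) (hp : #p = 2) (hpL : p ∉ L) :
    #{q ∈ L | Disjoint p q} + 2 = #L := by
  obtain ⟨x, y, -, rfl⟩ := card_eq_two.1 hp
  obtain ⟨a, ⟨ha, hxa⟩, -⟩ := hL x
  obtain ⟨b, ⟨hb, hyb⟩, -⟩ := hL y
  have hab : a ≠ b := by
    rintro rfl
    have hsub : {x, y} ⊆ a := insert_subset hxa (singleton_subset_iff.2 hyb)
    exact hpL (eq_of_subset_of_card_le hsub ((hcard a ha).trans hp.ge) ▸ ha)
  have hfilter : {q ∈ L | Disjoint {x, y} q} = L \ {a, b} := by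
    ext q
    rw [mem_filter, mem_sdiff]
    refine and_congr_right fun hq => ?_
    simp only [disjoint_insert_left, disjoint_singleton_left, mem_insert, mem_singleton, not_or,
      hL.mem_iff_eq ha hq hxa, hL.mem_iff_eq hb hq hyb]
  have hsub : {a, b} ⊆ L := insert_subset ha (singleton_subset_iff.2 hb)
  rw [hfilter, ← card_pair hab, card_sdiff_add_card_eq_card hsub]

variable [Fintype α]

/-- The family `{p, q, (p ∪ q)ᶜ}`, written for arbitrary `p` and `q`. For disjoint duads it is the
line joining them, i.e. the syntheme containing both. -/
def lineThrough (p q : Finset α) : Finset (Finset α) := {p, q, (p ∪ q)ᶜ}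

theorem left_mem_lineThrough (p q : Finset α) : p ∈ lineThrough p q :=
  mem_insert_self p _

theorem right_mem_lineThrough (p q : Finset α) : q ∈ lineThrough p q :=
  mem_insert_of_mem (mem_insert_self q _)

theorem isExactCover_lineThrough (h : Disjoint p q) : IsExactCover (lineThrough p q) := by
  intro i
  rw [lineThrough]
  have hi : i ∈ p → i ∉ q := fun hip => disjoint_left.1 h hip
  by_cases hip : i ∈ p
  · exact ⟨p, by grind [mem_compl]⟩
  by_cases hiq : i ∈ q
  · exact ⟨q, by grind [mem_compl]⟩
  · exact ⟨(p ∪ q)ᶜ, by grind [mem_compl]⟩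

theorem IsExactCover.eq_lineThrough (hL : IsExactCover L) (hcard : #L = 3)
    (hp : p ∈ L) (hq : q ∈ L) (hpq : p ≠ q) : L = lineThrough p q := by
  have hq' : q ∈ L.erase p := mem_erase.2 ⟨hpq.symm, hq⟩
  obtain ⟨r, hr⟩ : ∃ r, (L.erase p).erase q = {r} := by
    rw [← card_eq_one, card_erase_of_mem hq', card_erase_of_mem hp, hcard]
  have hL_eq : L = {p, q, r} := by rw [← hr, insert_erase hq', insert_erase hp]
  obtain ⟨hrq, hrp, hrL⟩ : r ≠ q ∧ r ≠ p ∧ r ∈ L := by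
    simpa only [mem_erase] using hr.ge (mem_singleton_self r)
  have hdisj : Disjoint (p ∪ q) r :=
    disjoint_union_left.2 ⟨hL.disjoint hp hrL hrp.symm, hL.disjoint hq hrL hrq.symm⟩
  have hcover : p ∪ q ∪ r = univ := eq_univ_of_forall fun i => by
    obtain ⟨s, ⟨hs, his⟩, -⟩ := hL i
    grind
  rw [lineThrough, (IsCompl.of_eq hdisj.eq_bot hcover).compl_eq, hL_eq]

end ExactCover

section Syntheme

variable {L : Finset (Finset (Fin 6))} {p q : Finset (Fin 6)} {a : Fin 6}

theorem IsSyntheme.isDuad (hL : IsSyntheme L) (hp : p ∈ L) : IsDuad p := hL.2.1 p hp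

theorem IsSyntheme.isExactCover (hL : IsSyntheme L) : IsExactCover L := hL.2.2

theorem IsSyntheme.eq_lineThrough (hL : IsSyntheme L) (hp : p ∈ L) (hq : q ∈ L) (hpq : p ≠ q) :
    L = lineThrough p q :=
  hL.isExactCover.eq_lineThrough hL.1 hp hq hpq

theorem isSyntheme_lineThrough (hp : IsDuad p) (hq : IsDuad q) (h : Disjoint p q) :
    IsSyntheme (lineThrough p q) := by
  have hr : IsDuad (p ∪ q)ᶜ := by
    rw [IsDuad, card_compl, card_union_of_disjoint h, hp, hq, Fintype.card_fin]
  have hne {s t : Finset (Fin 6)} (hs : IsDuad s) (hst : Disjoint s t) : s ≠ t :=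
    hst.ne (card_pos.1 (hs ▸ two_pos)).ne_empty
  have hpqr : Disjoint (p ∪ q) (p ∪ q)ᶜ := disjoint_compl_right
  obtain ⟨hpr, hqr⟩ := disjoint_union_left.1 hpqr
  refine ⟨card_eq_three.2 ⟨p, q, _, hne hp h, hne hp hpr, hne hq hqr, rfl⟩, ?_,
    isExactCover_lineThrough h⟩
  simpa only [lineThrough, forall_mem_insert, mem_singleton, forall_eq] using ⟨hp, hq, hr⟩

theorem exists_isSyntheme_mem_iff_disjoint (hp : IsDuad p) (hq : IsDuad q) (hpq : p ≠ q) :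
    (∃ M, IsSyntheme M ∧ p ∈ M ∧ q ∈ M) ↔ Disjoint p q where
  mp := fun ⟨_, hM, hpM, hqM⟩ => hM.isExactCover.disjoint hpM hqM hpq
  mpr h := ⟨lineThrough p q, isSyntheme_lineThrough hp hq h, left_mem_lineThrough p q,
    right_mem_lineThrough p q⟩

theorem IsSyntheme.exists_eq_lineThrough_pair (hL : IsSyntheme L) (hp : p ∈ L) (ha : a ∉ p) :
    ∃ b ∈ pᶜ.erase a, L = lineThrough p {a, b} := by
  obtain ⟨q, ⟨hq, haq⟩, -⟩ := hL.isExactCover a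
  have hpq : p ≠ q := (ne_of_mem_of_not_mem' haq ha).symm
  obtain ⟨b, hb⟩ : ∃ b, q.erase a = {b} := by
    rw [← card_eq_one, card_erase_of_mem haq, hL.isDuad hq]
  obtain ⟨hba, hbq⟩ := mem_erase.1 (hb.ge (mem_singleton_self b))
  have hbp : b ∉ p := disjoint_right.1 (hL.isExactCover.disjoint hp hq hpq) hbq
  refine ⟨b, mem_erase.2 ⟨hba, mem_compl.2 hbp⟩, ?_⟩
  rw [← hb, insert_erase haq]
  exact hL.eq_lineThrough hp hq hpq

theorem bijOn_lineThrough_pair (hp : IsDuad p) (ha : a ∉ p) :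
    Set.BijOn (fun b => lineThrough p {a, b}) (pᶜ.erase a) {L | IsSyntheme L ∧ p ∈ L} := by
  have hsyntheme {b} (hb : b ∈ pᶜ.erase a) : IsSyntheme (lineThrough p {a, b}) := by
    obtain ⟨hba, hbp⟩ := mem_erase.1 hb
    refine isSyntheme_lineThrough hp (card_pair hba.symm) ?_
    exact disjoint_insert_right.2 ⟨ha, disjoint_singleton_right.2 (mem_compl.1 hbp)⟩
  refine ⟨fun b hb => ⟨hsyntheme hb, left_mem_lineThrough _ _⟩, fun b hb c _ hbc => ?_, ?_⟩
  · have hac : {a, c} ∈ lineThrough p {a, b} := hbc.ge <| right_mem_lineThrough p {a, c}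
    have hpair : ({a, b} : Finset (Fin 6)) = {a, c} :=
      ((hsyntheme hb).isExactCover.mem_iff_eq hac (right_mem_lineThrough _ _)
        (mem_insert_self a _)).1 (mem_insert_self a _)
    have hb_mem : b ∈ ({a, c} : Finset (Fin 6)) := hpair ▸ mem_insert_of_mem (mem_singleton_self b)
    exact mem_singleton.1 (mem_of_mem_insert_of_ne hb_mem (ne_of_mem_erase hb))
  · rintro L ⟨hL, hpL⟩
    obtain ⟨b, hb, hL_eq⟩ := hL.exists_eq_lineThrough_pair hpL ha
    exact ⟨b, hb, hL_eq.symm⟩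

theorem ncard_isSyntheme_mem (hp : IsDuad p) : {L | IsSyntheme L ∧ p ∈ L}.ncard = 3 := by
  have hcompl : #pᶜ = 4 := by rw [card_compl, hp, Fintype.card_fin]
  obtain ⟨a, ha⟩ : pᶜ.Nonempty := card_pos.1 (by lia)
  have hbij := bijOn_lineThrough_pair hp (mem_compl.1 ha)
  rw [← hbij.ncard_eq, Set.ncard_coe_finset, card_erase_of_mem ha, hcompl]

theorem IsSyntheme.existsUnique_disjoint (hL : IsSyntheme L) (hp : IsDuad p) (hpL : p ∉ L) :
    ∃! q, q ∈ L ∧ Disjoint p q := by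
  have hcard := hL.isExactCover.card_filter_disjoint_add_two (fun q hq => (hL.isDuad hq).le) hp hpL
  rw [hL.1] at hcard
  simpa only [mem_filter] using card_eq_one_iff_existsUnique.1 (Nat.add_right_cancel hcard)

end Syntheme

/-- The duad–syntheme incidence structure is a generalized quadrangle of order two (the
doily): every syntheme contains exactly 3 duads, every duad lies in exactly 3 synthemes,
two distinct duads lie in at most one common syntheme, and for every duad p and every
syntheme L not containing p there is exactly one duad q on L collinear with p. -/
theorem duad_syntheme_is_GQ_2_2 :
    (∀ L, IsSyntheme L → L.card = 3) ∧
    (∀ p, IsDuad p → {L | IsSyntheme L ∧ p ∈ L}.ncard = 3) ∧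
    (∀ p q, IsDuad p → IsDuad q → p ≠ q →
      {L | IsSyntheme L ∧ p ∈ L ∧ q ∈ L}.Subsingleton) ∧
    (∀ p L, IsDuad p → IsSyntheme L → p ∉ L →
      ∃! q, q ∈ L ∧ ∃ M, IsSyntheme M ∧ p ∈ M ∧ q ∈ M) := by
  refine ⟨fun L hL => hL.1, fun p hp => ncard_isSyntheme_mem hp, ?_, fun p L hp hL hpL => ?_⟩
  · rintro p q - - hpq L ⟨hL, hpL, hqL⟩ M ⟨hM, hpM, hqM⟩
    exact (hL.eq_lineThrough hpL hqL hpq).trans (hM.eq_lineThrough hpM hqM hpq).symm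
  · have hcollinear {q} (hq : q ∈ L) : (∃ M, IsSyntheme M ∧ p ∈ M ∧ q ∈ M) ↔ Disjoint p q :=
      exists_isSyntheme_mem_iff_disjoint hp (hL.isDuad hq) (ne_of_mem_of_not_mem hq hpL).symm
    have hmember (q) : (q ∈ L ∧ ∃ M, IsSyntheme M ∧ p ∈ M ∧ q ∈ M) ↔ q ∈ L ∧ Disjoint p q :=
      and_congr_right hcollinear
    simpa only [hmember] using hL.existsUnique_disjoint hp hpL
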